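/- Let θ_t, m_t, g_t, s_t be the AdaBelief sequences with projected updates. Assume α_t = α/√t with α > 0, β_{1,1} = β_1, 0 ≤ β_{1,t} ≤ β_1 < 1 for all t, s_{t,i} ≤ s_{t+1,i} and s_{t,i} ≥ c > 0 for all t ∈ [T] and coordinates i, each f_t is convex and differentiable with g_t = ∇f_t(θ_t) and ‖g_t‖_∞ ≤ G_∞/2, and F has ℓ∞-diameter at most D_∞. Then for every θ* ∈ F: Σ_{t=1}^T [f_t(θ_t) − f_t(θ*)] ≤ (D_∞² √T)/(2α(1−β_1)) Σ_{i=1}^d s_{T,i}^{1/2} + ((1+β_1) α √(1+log T))/(2√c (1−β_1)³) Σ_{i=1}^d sqrt(Σ_{t=1}^T g_{t,i}⁴) + (D_∞²)/(2(1−β_1)) Σ_{t=1}^T Σ_{i=1}^d β_{1,t} s_{t,i}^{1/2}/α_t. -/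

import Mathlib

lemma aux_grad {d : ℕ} (f : EuclideanSpace ℝ (Fin d) → ℝ) (g x z : EuclideanSpace ℝ (Fin d))
    (hf : ConvexOn ℝ Set.univ f) (hg : HasGradientAt f g x) :
    f x - f z ≤ ∑ i, g i * (x i - z i) := by
  have h1 : HasDerivAt (fun l : ℝ => f (AffineMap.lineMap x z l)) (inner ℝ g (z - x)) 0 := by
    have h2 : HasDerivAt (fun l : ℝ => (AffineMap.lineMap x z l : EuclideanSpace ℝ (Fin d)))
        (z - x) 0 := AffineMap.hasDerivAt_lineMap
    have h3 := hg.hasFDerivAt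
    have h4 : HasFDerivAt f ((InnerProductSpace.toDual ℝ _) g)
        (AffineMap.lineMap x z (0:ℝ)) := by simpa using h3
    have h5 := h4.comp_hasDerivAt (0:ℝ) h2
    have h6 : ((InnerProductSpace.toDual ℝ (EuclideanSpace ℝ (Fin d))) g) (z - x)
        = inner ℝ g (z - x) := by simp
    rw [h6] at h5
    exact h5
  have hc : ConvexOn ℝ Set.univ (fun l : ℝ => f (AffineMap.lineMap x z l)) := by
    have := hf.comp_affineMap (AffineMap.lineMap x z : ℝ →ᵃ[ℝ] EuclideanSpace ℝ (Fin d))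
    simpa [Function.comp_def] using this
  have h6 := hc.le_slope_of_hasDerivAt (Set.mem_univ 0) (Set.mem_univ 1) one_pos h1
  simp [slope_def_field] at h6
  have h7 : inner ℝ g (z - x) = - ∑ i, g i * (x i - z i) := by
    simp only [PiLp.inner_apply, ← Finset.sum_neg_distrib]
    refine Finset.sum_congr rfl fun i _ => ?_
    simp; ring
  have h8 : inner ℝ g (z - x) = inner ℝ g z - inner ℝ g x := inner_sub_right _ _ _
  linarith

lemma aux_proj {d : ℕ} (F : Set (EuclideanSpace ℝ (Fin d))) (hF : Convex ℝ F)
    (w y : Fin d → ℝ) (hw : ∀ i, 0 ≤ w i) (p z : EuclideanSpace ℝ (Fin d)) (hp : p ∈ F) (hz : z ∈ F)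
    (hmin : ∀ x ∈ F, ∑ i, w i * (p i - y i) ^ 2 ≤ ∑ i, w i * (x i - y i) ^ 2) :
    ∑ i, w i * (p i - z i) ^ 2 ≤ ∑ i, w i * (y i - z i) ^ 2 := by
  set B := ∑ i, w i * ((p i - y i) * (z i - p i)) with hB
  set C := ∑ i, w i * (z i - p i) ^ 2 with hC
  have hC0 : 0 ≤ C := Finset.sum_nonneg fun i _ => mul_nonneg (hw i) (sq_nonneg _)
  have key : ∀ l : ℝ, 0 < l → l ≤ 1 → 0 ≤ 2 * B + l * C := by
    intro l hl hl1
    have hx : p + l • (z - p) ∈ F := hF.add_smul_sub_mem hp hz ⟨hl.le, hl1⟩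
    have h := hmin _ hx
    have e : ∑ i, w i * ((p + l • (z - p)) i - y i) ^ 2
        = ∑ i, w i * (p i - y i) ^ 2 + l * (2 * B + l * C) := by
      rw [hB, hC, Finset.mul_sum, Finset.mul_sum, ← Finset.sum_add_distrib, Finset.mul_sum,
        ← Finset.sum_add_distrib]
      refine Finset.sum_congr rfl fun i _ => ?_
      simp; ring
    rw [e] at h
    exact nonneg_of_mul_nonneg_right (by linarith) hl
  have hB0 : 0 ≤ B := by
    by_contra! hneg
    rcases hC0.eq_or_lt with h0 | h0
    · have := key 1 one_pos le_rfl
      rw [← h0] at this; linarith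
    · have := key (min 1 (-B / C)) (lt_min one_pos (div_pos (by linarith) h0)) (min_le_left _ _)
      have h2 : min 1 (-B / C) * C ≤ -B := by
        calc _ ≤ (-B / C) * C := by gcongr; exact min_le_right _ _
          _ = -B := by field_simp
      linarith
  have e : ∑ i, w i * (y i - z i) ^ 2 = ∑ i, w i * (p i - z i) ^ 2
      + ∑ i, w i * (p i - y i) ^ 2 + 2 * B := by
    rw [hB, Finset.mul_sum, ← Finset.sum_add_distrib, ← Finset.sum_add_distrib]
    refine Finset.sum_congr rfl fun i _ => ?_
    ring
  have : 0 ≤ ∑ i, w i * (p i - y i) ^ 2 :=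
    Finset.sum_nonneg fun i _ => mul_nonneg (hw i) (sq_nonneg _)
  linarith

lemma aux_tele (u Δ : ℕ → ℝ) (E : ℝ) (T : ℕ) (hu : ∀ t, 1 ≤ t → t ≤ T → 0 ≤ u t)
    (hmono : ∀ t, 1 ≤ t → t < T → u t ≤ u (t + 1))
    (hΔ : ∀ t, 1 ≤ t → 0 ≤ Δ t ∧ Δ t ≤ E) (hT : 1 ≤ T) :
    ∑ t ∈ Finset.Icc 1 T, u t * (Δ t - Δ (t + 1)) ≤ E * u T := by
  suffices h : ∑ t ∈ Finset.Icc 1 T, u t * (Δ t - Δ (t + 1)) ≤ E * u T - u T * Δ (T + 1) by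
    have := mul_nonneg (hu T hT le_rfl) (hΔ (T + 1) (by omega)).1
    linarith
  induction T, hT using Nat.le_induction with
  | base =>
    simp
    have := mul_le_mul_of_nonneg_left (hΔ 1 le_rfl).2 (hu 1 le_rfl le_rfl)
    linarith
  | succ n hn ih =>
    have ih := ih (fun t h1 h2 => hu t h1 (by omega)) (fun t h1 h2 => hmono t h1 (by omega))
    rw [Finset.sum_Icc_succ_top (by omega)]
    have h1 := hmono n hn (by omega)
    have h2 := (hΔ (n + 1) (by omega)).2
    nlinarith [mul_nonneg (sub_nonneg.2 h1) (sub_nonneg.2 h2)]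

lemma aux_mom (a b m g : ℕ → ℝ) (β : ℝ) (hβ0 : 0 ≤ β)
    (ha : ∀ t, 1 ≤ t → 0 ≤ a t) (hanti : ∀ t, 1 ≤ t → a (t + 1) ≤ a t)
    (hb : ∀ t, 0 ≤ b t ∧ b t ≤ β) (hb1 : β < 1) (hm0 : m 0 = 0)
    (hm : ∀ t, 1 ≤ t → m t = b t * m (t - 1) + (1 - b t) * g t) (T : ℕ) :
    (1 - β) * ∑ t ∈ Finset.Icc 1 T, a t * (b t * m (t - 1) ^ 2 + (1 - b t) * g t ^ 2)
      ≤ ∑ t ∈ Finset.Icc 1 T, a t * g t ^ 2 := by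
  suffices h : (1 - β) * ∑ t ∈ Finset.Icc 1 T, a t * (b t * m (t - 1) ^ 2 + (1 - b t) * g t ^ 2)
      + β * (a (T + 1) * m T ^ 2) ≤ ∑ t ∈ Finset.Icc 1 T, a t * g t ^ 2 by
    have := mul_nonneg hβ0 (mul_nonneg (ha (T + 1) (by omega)) (sq_nonneg (m T)))
    linarith
  induction T with
  | zero => simp [hm0]
  | succ n ih =>
    rw [Finset.sum_Icc_succ_top (by omega), Finset.sum_Icc_succ_top (by omega)]
    have e := hm (n + 1) (by omega)
    simp only [Nat.add_sub_cancel] at e ⊢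
    obtain ⟨h0, h1⟩ := hb (n + 1)
    set q := b (n + 1) * m n ^ 2 + (1 - b (n + 1)) * g (n + 1) ^ 2 with hq
    have hmq : m (n + 1) ^ 2 ≤ q := by
      have : q - m (n + 1) ^ 2 = b (n + 1) * (1 - b (n + 1)) * (g (n + 1) - m n) ^ 2 := by
        rw [hq, e]; ring
      have : 0 ≤ b (n + 1) * (1 - b (n + 1)) * (g (n + 1) - m n) ^ 2 :=
        mul_nonneg (mul_nonneg h0 (by linarith)) (sq_nonneg _)
      linarith
    have han := ha (n + 1) (by omega)
    have h3 : a (n + 1 + 1) * m (n + 1) ^ 2 ≤ a (n + 1) * q :=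
      mul_le_mul (hanti _ (by omega)) hmq (sq_nonneg _) han
    have h4 : β * (a (n + 1 + 1) * m (n + 1) ^ 2) ≤ β * (a (n + 1) * q) :=
      mul_le_mul_of_nonneg_left h3 hβ0
    have h5 : q - β * m n ^ 2 ≤ g (n + 1) ^ 2 := by
      nlinarith [mul_nonneg (sub_nonneg.2 h1) (sq_nonneg (m n)),
        mul_nonneg h0 (sq_nonneg (g (n + 1)))]
    have h6 := mul_le_mul_of_nonneg_left h5 han
    nlinarith

lemma aux_cs (α : ℝ) (hα : 0 < α) (g : ℕ → ℝ) (T : ℕ) :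
    ∑ t ∈ Finset.Icc 1 T, α / Real.sqrt t * g t ^ 2 ≤
      α * Real.sqrt (1 + Real.log T) * Real.sqrt (∑ t ∈ Finset.Icc 1 T, g t ^ 4) := by
  have h := Real.sum_mul_le_sqrt_mul_sqrt (Finset.Icc 1 T) (fun t => 1 / Real.sqrt (t : ℝ))
    (fun t => g t ^ 2)
  have h2 : ∑ t ∈ Finset.Icc 1 T, (1 / Real.sqrt (t : ℝ)) ^ 2 ≤ 1 + Real.log T := by
    have := harmonic_le_one_add_log T
    rw [harmonic_eq_sum_Icc] at this
    push_cast at this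
    refine le_trans (le_of_eq (Finset.sum_congr rfl fun t _ => ?_)) this
    rw [div_pow, Real.sq_sqrt (Nat.cast_nonneg t)]; simp
  have h3 : ∑ t ∈ Finset.Icc 1 T, (g t ^ 2) ^ 2 = ∑ t ∈ Finset.Icc 1 T, g t ^ 4 :=
    Finset.sum_congr rfl fun t _ => by ring
  rw [h3] at h
  have h4 := h.trans (mul_le_mul_of_nonneg_right (Real.sqrt_le_sqrt h2) (Real.sqrt_nonneg _))
  have h5 := mul_le_mul_of_nonneg_left h4 hα.le
  rw [Finset.mul_sum] at h5
  calc _ = _ := Finset.sum_congr rfl fun t _ => by ring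
    _ ≤ _ := h5
    _ = _ := by ring

/-- Theorem 2.1: regret bound for AdaBelief with projected updates in the
convex online setting. `θ_{t+1}` is the point of `F` minimizing
`x ↦ Σ_i √(s_{t,i})(x_i - y_{t,i})²` with `y_t = θ_t - α_t m_t/√s_t`, `α_t = α/√t`,
`β_{1,1} = β₁`, `0 ≤ β_{1,t} ≤ β₁ < 1`, `c ≤ s_{t,i}` and `s` componentwise
nondecreasing on `[T]`, each `f_t` convex and differentiable with `g_t = ∇f_t(θ_t)`,
`‖g_t‖_∞ ≤ G_∞/2`, and `F` of ℓ∞-diameter at most `D_∞`. -/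
theorem adabelief_convex_regret
    (d T : ℕ)
    (F : Set (EuclideanSpace ℝ (Fin d)))
    (hFne : F.Nonempty) (hFclosed : IsClosed F) (hFconvex : Convex ℝ F)
    (D G c α β₁ : ℝ)
    (hD : ∀ x ∈ F, ∀ y ∈ F, ∀ i, |x i - y i| ≤ D)
    (hα : 0 < α) (hc : 0 < c) (hβ₁0 : 0 ≤ β₁) (hβ₁1 : β₁ < 1)
    (β1seq : ℕ → ℝ)
    (hβ11 : β1seq 1 = β₁)
    (hβseq : ∀ t, 0 ≤ β1seq t ∧ β1seq t ≤ β₁)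
    (f : ℕ → EuclideanSpace ℝ (Fin d) → ℝ)
    (θ m g : ℕ → EuclideanSpace ℝ (Fin d)) (s : ℕ → Fin d → ℝ)
    (hθ1 : θ 1 ∈ F)
    (hm0 : m 0 = 0)
    (hm : ∀ t, 1 ≤ t → ∀ i, m t i = β1seq t * m (t - 1) i + (1 - β1seq t) * g t i)
    (hconvex : ∀ t, ConvexOn ℝ Set.univ (f t))
    (hgrad : ∀ t, 1 ≤ t → HasGradientAt (f t) (g t) (θ t))
    (hgbound : ∀ t, 1 ≤ t → ∀ i, |g t i| ≤ G / 2)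
    (hslb : ∀ t ∈ Finset.Icc 1 T, ∀ i, c ≤ s t i)
    (hsmono : ∀ t ∈ Finset.Icc 1 T, ∀ i, s t i ≤ s (t + 1) i)
    (hmem : ∀ t, 1 ≤ t → θ (t + 1) ∈ F)
    (hmin : ∀ t, 1 ≤ t → ∀ x ∈ F,
      (∑ i, Real.sqrt (s t i) *
          (θ (t + 1) i - (θ t i - α / Real.sqrt t * m t i / Real.sqrt (s t i))) ^ 2)
        ≤ ∑ i, Real.sqrt (s t i) *
            (x i - (θ t i - α / Real.sqrt t * m t i / Real.sqrt (s t i))) ^ 2) :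
    ∀ θstar ∈ F,
      ∑ t ∈ Finset.Icc 1 T, (f t (θ t) - f t θstar)
        ≤ D ^ 2 * Real.sqrt T / (2 * α * (1 - β₁)) * ∑ i, Real.sqrt (s T i)
          + (1 + β₁) * α * Real.sqrt (1 + Real.log T) /
              (2 * Real.sqrt c * (1 - β₁) ^ 3) *
              ∑ i, Real.sqrt (∑ t ∈ Finset.Icc 1 T, (g t i) ^ 4)
          + D ^ 2 / (2 * (1 - β₁)) *
              ∑ t ∈ Finset.Icc 1 T, ∑ i,
                β1seq t * Real.sqrt (s t i) / (α / Real.sqrt t) := by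
  intro z hz
  rcases Nat.eq_zero_or_pos T with rfl | hT
  · simp
  have hθ : ∀ t, 1 ≤ t → θ t ∈ F := by
    intro t ht
    rcases ht.eq_or_lt with rfl | h
    · exact hθ1
    · obtain ⟨k, rfl⟩ : ∃ k, t = k + 1 := ⟨t - 1, by omega⟩
      exact hmem k (by omega)
  have hΔ : ∀ i, ∀ t, 1 ≤ t → 0 ≤ (θ t i - z i) ^ 2 ∧ (θ t i - z i) ^ 2 ≤ D ^ 2 := by
    intro i t ht
    refine ⟨sq_nonneg _, ?_⟩
    have h := hD _ (hθ t ht) _ hz i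
    exact sq_le_sq' (abs_le.1 h).1 (abs_le.1 h).2
  have hb : 0 < 1 - β₁ := by linarith
  have hsc : 0 < Real.sqrt c := Real.sqrt_pos.2 hc
  have hat : ∀ t : ℕ, 1 ≤ t → 0 < α / Real.sqrt t := fun t ht =>
    div_pos hα (Real.sqrt_pos.2 (by exact_mod_cast ht))
  have hws : ∀ t ∈ Finset.Icc 1 T, ∀ i, Real.sqrt c ≤ Real.sqrt (s t i) := fun t ht i =>
    Real.sqrt_le_sqrt (hslb t ht i)
  -- per step bound
  have step : ∀ t ∈ Finset.Icc 1 T, f t (θ t) - f t z ≤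
      ∑ i, ((Real.sqrt (s t i) / (α / Real.sqrt t)) * ((θ t i - z i) ^ 2 - (θ (t + 1) i - z i) ^ 2) / 2
        + D ^ 2 / (2 * (1 - β₁)) * (β1seq t * Real.sqrt (s t i) / (α / Real.sqrt t))
        + (α / Real.sqrt t * (β1seq t * m (t - 1) i ^ 2 + (1 - β1seq t) * g t i ^ 2))
            / (2 * Real.sqrt c)) := by
    intro t ht
    have ht1 := (Finset.mem_Icc.1 ht).1
    have hgr := aux_grad (f t) (g t) (θ t) z (hconvex t) (hgrad t ht1)
    have hpr := aux_proj F hFconvex (fun i => Real.sqrt (s t i))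
      (fun i => θ t i - α / Real.sqrt t * m t i / Real.sqrt (s t i))
      (fun i => Real.sqrt_nonneg _) (θ (t + 1)) z (hmem t ht1) hz (hmin t ht1)
    refine hgr.trans ?_
    have ha := hat t ht1
    set a := α / Real.sqrt t with hadef
    have h0 : 0 ≤ (∑ i, Real.sqrt (s t i) * (θ t i - a * m t i / Real.sqrt (s t i) - z i) ^ 2
        - ∑ i, Real.sqrt (s t i) * (θ (t + 1) i - z i) ^ 2) / (2 * a) :=
      div_nonneg (by simpa using hpr) (by positivity)
    refine le_trans (le_add_of_nonneg_right h0) ?_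
    rw [← Finset.sum_sub_distrib, Finset.sum_div, ← Finset.sum_add_distrib]
    refine Finset.sum_le_sum fun i _ => ?_
    have hwc := hws t ht i
    have hw : 0 < Real.sqrt (s t i) := hsc.trans_le hwc
    set w := Real.sqrt (s t i) with hwdef
    obtain ⟨hB0, hB1⟩ := hβseq t
    have hmt := hm t ht1 i
    have hx := (hΔ i t ht1).2
    set b := β1seq t with hbdef
    have hb' : 0 < 1 - b := by linarith
    set x := θ t i - z i with hxdef
    set M := m (t - 1) i
    set G' := g t i
    set x' := θ (t + 1) i - z i
    have e1 : θ t i - a * m t i / w - z i = x - a * m t i / w := by rw [hxdef]; ring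
    rw [e1]
    have e2 : (w * (x - a * m t i / w) ^ 2 - w * x' ^ 2) / (2 * a)
        = w / a * (x ^ 2 - x' ^ 2) / 2 - m t i * x + a * m t i ^ 2 / (2 * w) := by
      field_simp; ring
    rw [e2]
    -- Young
    have e3 : G' * x - m t i * x = b * (G' - M) * x := by rw [hmt]; ring
    have hyoung : b * (G' - M) * x ≤
        b / (1 - b) * (w / a) * x ^ 2 / 2 + b * (1 - b) * a * (G' - M) ^ 2 / (2 * w) := by
      have : b / (1 - b) * (w / a) * x ^ 2 / 2 + b * (1 - b) * a * (G' - M) ^ 2 / (2 * w)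
          - b * (G' - M) * x = b / (2 * (1 - b) * a * w) * (w * x - (1 - b) * a * (G' - M)) ^ 2 := by
        field_simp; ring
      have : 0 ≤ b / (2 * (1 - b) * a * w) * (w * x - (1 - b) * a * (G' - M)) ^ 2 := by positivity
      linarith
    have e4 : a * m t i ^ 2 / (2 * w) + b * (1 - b) * a * (G' - M) ^ 2 / (2 * w)
        = a * (b * M ^ 2 + (1 - b) * G' ^ 2) / (2 * w) := by rw [hmt]; ring
    have h5 : a * (b * M ^ 2 + (1 - b) * G' ^ 2) / (2 * w)
        ≤ a * (b * M ^ 2 + (1 - b) * G' ^ 2) / (2 * Real.sqrt c) := by gcongr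
    have h6 : b / (1 - b) * (w / a) * x ^ 2 / 2 ≤ D ^ 2 / (2 * (1 - β₁)) * (b * w / a) := by
      calc _ ≤ b / (1 - β₁) * (w / a) * D ^ 2 / 2 := by gcongr
        _ = _ := by field_simp
    linarith
  refine (Finset.sum_le_sum step).trans ?_
  simp only [Finset.sum_add_distrib]
  have first : ∑ t ∈ Finset.Icc 1 T, ∑ i, (Real.sqrt (s t i) / (α / Real.sqrt t)) *
      ((θ t i - z i) ^ 2 - (θ (t + 1) i - z i) ^ 2) / 2 ≤
      D ^ 2 * Real.sqrt T / (2 * α * (1 - β₁)) * ∑ i, Real.sqrt (s T i) := by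
    rw [Finset.sum_comm, Finset.mul_sum]
    refine Finset.sum_le_sum fun i _ => ?_
    rw [← Finset.sum_div]
    have h := aux_tele (fun t => Real.sqrt (s t i) / (α / Real.sqrt t))
      (fun t => (θ t i - z i) ^ 2) (D ^ 2) T
      (fun t h1 _ => div_nonneg (Real.sqrt_nonneg _) (hat t h1).le)
      (fun t h1 h2 => by
        have h3 : Real.sqrt (s t i) ≤ Real.sqrt (s (t + 1) i) :=
          Real.sqrt_le_sqrt (hsmono t (Finset.mem_Icc.2 ⟨h1, h2.le⟩) i)
        have h4 : Real.sqrt (t : ℝ) ≤ Real.sqrt ((t + 1 : ℕ) : ℝ) :=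
          Real.sqrt_le_sqrt (by push_cast; linarith)
        simp only [div_div_eq_mul_div]
        gcongr)
      (hΔ i) hT
    have h7 : D ^ 2 * (Real.sqrt (s T i) / (α / Real.sqrt T)) / 2
        ≤ D ^ 2 * (Real.sqrt (s T i) / (α / Real.sqrt T)) / 2 / (1 - β₁) := by
      have := hat T hT
      exact le_div_self (by positivity) hb (by linarith)
    have h8 : D ^ 2 * (Real.sqrt (s T i) / (α / Real.sqrt T)) / 2 / (1 - β₁)
        = D ^ 2 * Real.sqrt T / (2 * α * (1 - β₁)) * Real.sqrt (s T i) := by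
      field_simp
    linarith
  have second : ∑ t ∈ Finset.Icc 1 T, ∑ i,
      (α / Real.sqrt t * (β1seq t * m (t - 1) i ^ 2 + (1 - β1seq t) * g t i ^ 2))
            / (2 * Real.sqrt c) ≤ (1 + β₁) * α * Real.sqrt (1 + Real.log T) /
              (2 * Real.sqrt c * (1 - β₁) ^ 3) *
              ∑ i, Real.sqrt (∑ t ∈ Finset.Icc 1 T, (g t i) ^ 4) := by
    rw [Finset.sum_comm, Finset.mul_sum]
    refine Finset.sum_le_sum fun i _ => ?_
    rw [← Finset.sum_div]
    have h1 := aux_mom (fun t => α / Real.sqrt t) β1seq (fun t => m t i) (fun t => g t i) β₁ hβ₁0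
      (fun t ht => (hat t ht).le)
      (fun t ht => by
        have h4 : Real.sqrt (t : ℝ) ≤ Real.sqrt ((t + 1 : ℕ) : ℝ) :=
          Real.sqrt_le_sqrt (by push_cast; linarith)
        have h5 : 0 < Real.sqrt (t : ℝ) := Real.sqrt_pos.2 (by exact_mod_cast ht)
        exact div_le_div_of_nonneg_left hα.le h5 h4)
      hβseq hβ₁1 (by simp [hm0]) (fun t ht => hm t ht i) T
    have h2 := h1.trans (aux_cs α hα (fun t => g t i) T)
    simp only at h2
    set S := ∑ t ∈ Finset.Icc 1 T,
      α / Real.sqrt t * (β1seq t * m (t - 1) i ^ 2 + (1 - β1seq t) * g t i ^ 2) with hS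
    set Q := α * Real.sqrt (1 + Real.log T) *
      Real.sqrt (∑ t ∈ Finset.Icc 1 T, g t i ^ 4) with hQ
    have hQ0 : 0 ≤ Q := by positivity
    have h3 : S ≤ Q / (1 - β₁) := by
      rw [le_div_iff₀ hb]; linarith
    have h4 : Q / (1 - β₁) ≤ (1 + β₁) * Q / (1 - β₁) ^ 3 := by
      have h5 : (1 - β₁) ^ 3 ≤ 1 - β₁ := by
        calc (1 - β₁) ^ 3 ≤ (1 - β₁) ^ 1 :=
              pow_le_pow_of_le_one hb.le (by linarith) (by norm_num)
          _ = _ := pow_one _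
      have h6 : Q ≤ (1 + β₁) * Q := by nlinarith
      gcongr
    calc S / (2 * Real.sqrt c) ≤ ((1 + β₁) * Q / (1 - β₁) ^ 3) / (2 * Real.sqrt c) := by
          gcongr; exact h3.trans h4
      _ = _ := by rw [hQ]; field_simp
  have third : ∑ t ∈ Finset.Icc 1 T, ∑ i,
      D ^ 2 / (2 * (1 - β₁)) * (β1seq t * Real.sqrt (s t i) / (α / Real.sqrt t))
      = D ^ 2 / (2 * (1 - β₁)) * ∑ t ∈ Finset.Icc 1 T, ∑ i,
                β1seq t * Real.sqrt (s t i) / (α / Real.sqrt t) := by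
    simp only [Finset.mul_sum]
  linarith
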